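/- Let B ⊂ ℝ⁴ be open and f = (f⁴,…,f⁷): B → ℝ⁴ smooth, with Fourier–Mukai curvature F_∇^S as in the context. Then at every point of B: ( 1 + ½⟨(F_∇^S)², Φ⟩ + (1/24)·*₈((F_∇^S)⁴) )² + 4‖ π²₇( F_∇^S + (1/6)·*₈(F_∇^S)³ ) ‖² + 2‖ π⁴₇( (F_∇^S)² ) ‖² = det( id_{ℝ⁸} + (−√−1·F_∇^S)^♯ ). -/

import Mathlib

open scoped BigOperators

noncomputable section

namespace FMpaper

variable {K : Type*} [NormedField K] [NormedAlgebra ℝ K]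

/-- Coefficient model for the exterior algebra of `(ℝⁿ)*` with scalars in `K`:
a form is given by its coefficients on the basis `e^S`, `S ⊆ {0, …, n-1}` sorted. -/
abbrev Form (K : Type*) (n : ℕ) := Finset (Fin n) → K

variable {n : ℕ}

/-- Sign such that `e^s ∧ e^t = signMerge s t • e^(s ∪ t)` for disjoint sorted `s, t`. -/
def signMerge (s t : Finset (Fin n)) : K :=
  (-1 : K) ^ (((s ×ˢ t).filter (fun p => p.2 < p.1)).card)

/-- Wedge product. -/
def wedge (α β : Form K n) : Form K n :=
  fun u => ∑ s ∈ u.powerset, signMerge s (u \ s) * α s * β (u \ s)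

/-- Hodge star operator (for the standard inner product and orientation `e^{0⋯(n-1)}`). -/
def hstar (α : Form K n) : Form K n :=
  fun t => signMerge tᶜ t * α tᶜ

/-- Interior product with the basis vector `e_μ`. -/
def iprodB (μ : Fin n) (α : Form K n) : Form K n :=
  fun t => if μ ∈ t then 0
    else (-1 : K) ^ ((t.filter (fun j => j < μ)).card) * α (insert μ t)

/-- Interior product with the vector `v`. -/
def iprod (v : Fin n → K) (α : Form K n) : Form K n :=
  fun t => ∑ μ, v μ * iprodB μ α t

/-- The basis covector `e^i` as a 1-form. -/
def e1 (i : Fin n) : Form K n := fun s => if s = {i} then 1 else 0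

/-- The covector `v♭` dual to a vector `v`. -/
def flat (v : Fin n → K) : Form K n := ∑ i, v i • e1 i

/-- The vector `α♯` dual to a 1-form `α`. -/
def sharp1 (α : Form K n) : Fin n → K := fun i => α {i}

/-- The inner product of forms (extended `K`-bilinearly). -/
def inner' (α β : Form K n) : K := ∑ s, α s * β s

/-- The (Euclidean) norm of a form; for an `√-1 ℝ`-valued form `√-1 γ` this is `‖γ‖`. -/
def fnorm (α : Form K n) : ℝ := Real.sqrt (∑ s, ‖α s‖ ^ 2)

/-- `α` is homogeneous of degree `k`. -/
def isGrade (k : ℕ) (α : Form K n) : Prop := ∀ s, s.card ≠ k → α s = 0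

/-- Evaluation of a `k`-form on `k` vectors. -/
def evalForm {k : ℕ} (α : Form K n) (v : Fin k → (Fin n → K)) : K :=
  ∑ s : Finset (Fin n), α s *
    (if h : s.card = k then
      Matrix.det (Matrix.of fun i j => v i ((s.orderIsoOfFin h j : Fin n))) else 0)

/-- The matrix of the skew-symmetric endomorphism `γ♯` associated with a 2-form `γ`
via `⟨γ♯ u, v⟩ = γ(u, v)`. -/
def mat2 (γ : Form K n) : Matrix (Fin n) (Fin n) K :=
  Matrix.of fun i j => if i < j then γ {i, j} else if j < i then - γ {i, j} else 0

/-- The standard `G₂` 3-form `φ = e^{123}+e^{145}+e^{167}+e^{246}−e^{257}−e^{347}−e^{356}`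
on `ℝ⁷` (indices `1, …, 7` shifted to `0, …, 6`). -/
def phi7 : Form K 7 := fun s =>
  if s = ({0, 1, 2} : Finset (Fin 7)) then 1
  else if s = ({0, 3, 4} : Finset (Fin 7)) then 1
  else if s = ({0, 5, 6} : Finset (Fin 7)) then 1
  else if s = ({1, 3, 5} : Finset (Fin 7)) then 1
  else if s = ({1, 4, 6} : Finset (Fin 7)) then -1
  else if s = ({2, 3, 6} : Finset (Fin 7)) then -1
  else if s = ({2, 4, 5} : Finset (Fin 7)) then -1
  else 0

/-- `*₇φ = e^{4567}+e^{2367}+e^{2345}+e^{1357}−e^{1346}−e^{1256}−e^{1247}` on `ℝ⁷`. -/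
def psi7 : Form K 7 := fun s =>
  if s = ({3, 4, 5, 6} : Finset (Fin 7)) then 1
  else if s = ({1, 2, 5, 6} : Finset (Fin 7)) then 1
  else if s = ({1, 2, 3, 4} : Finset (Fin 7)) then 1
  else if s = ({0, 2, 4, 6} : Finset (Fin 7)) then 1
  else if s = ({0, 2, 3, 5} : Finset (Fin 7)) then -1
  else if s = ({0, 1, 4, 5} : Finset (Fin 7)) then -1
  else if s = ({0, 1, 3, 6} : Finset (Fin 7)) then -1
  else 0

/-- The `G₂` 3-form `φ` on `V = span{e₁, …, e₇} ⊂ ℝ⁸`, regarded as a form on `ℝ⁸`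
annihilated by `i(e₀)` (indices `1, …, 7` of `ℝ⁸`). -/
def phi8 : Form K 8 := fun s =>
  if s = ({1, 2, 3} : Finset (Fin 8)) then 1
  else if s = ({1, 4, 5} : Finset (Fin 8)) then 1
  else if s = ({1, 6, 7} : Finset (Fin 8)) then 1
  else if s = ({2, 4, 6} : Finset (Fin 8)) then 1
  else if s = ({2, 5, 7} : Finset (Fin 8)) then -1
  else if s = ({3, 4, 7} : Finset (Fin 8)) then -1
  else if s = ({3, 5, 6} : Finset (Fin 8)) then -1
  else 0

/-- `*₇φ` on `V ⊂ ℝ⁸`, regarded as a 4-form on `ℝ⁸` annihilated by `i(e₀)`. -/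
def psi8 : Form K 8 := fun s =>
  if s = ({4, 5, 6, 7} : Finset (Fin 8)) then 1
  else if s = ({2, 3, 6, 7} : Finset (Fin 8)) then 1
  else if s = ({2, 3, 4, 5} : Finset (Fin 8)) then 1
  else if s = ({1, 3, 5, 7} : Finset (Fin 8)) then 1
  else if s = ({1, 3, 4, 6} : Finset (Fin 8)) then -1
  else if s = ({1, 2, 5, 6} : Finset (Fin 8)) then -1
  else if s = ({1, 2, 4, 7} : Finset (Fin 8)) then -1
  else 0

/-- The standard Cayley 4-form `Φ = e⁰ ∧ φ + *₇φ` on `ℝ⁸`. -/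
def Phi8 : Form K 8 := wedge (e1 0) phi8 + psi8

/-- The index set of `V = span{e₁, …, e₇} ⊂ ℝ⁸`. -/
def Vset : Finset (Fin 8) := {1, 2, 3, 4, 5, 6, 7}

/-- The Hodge star `*₇` of `V ⊂ ℝ⁸` (volume form `e^{1⋯7}`), acting on forms on `ℝ⁸`
annihilated by `i(e₀)`. -/
def star7 (α : Form K 8) : Form K 8 :=
  fun t => if (0 : Fin 8) ∈ t then 0 else signMerge (Vset \ t) t * α (Vset \ t)

/-- `α` is (the pullback of) a form on `V`, i.e. `i(e₀) α = 0`. -/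
def onV (α : Form K 8) : Prop := ∀ s, (0 : Fin 8) ∈ s → α s = 0

/-- `λ²(α) = ½ (e⁰ ∧ α + i(α♯) φ)` for `α ∈ V*`. -/
def lambda2 (α : Form K 8) : Form K 8 :=
  (2 : K)⁻¹ • (wedge (e1 0) α + iprod (sharp1 α) phi8)

/-- `λ⁴(α) = (1/√8) (e⁰ ∧ i(α♯) *₇φ − α ∧ φ)` for `α ∈ V*`. -/
def lambda4 (α : Form K 8) : Form K 8 :=
  (algebraMap ℝ K (Real.sqrt 8))⁻¹ • (wedge (e1 0) (iprod (sharp1 α) psi8) - wedge α phi8)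

/-- `λ⁶(α) = *₈ λ²(α)` for `α ∈ V*`. -/
def lambda6 (α : Form K 8) : Form K 8 := hstar (lambda2 α)

/-- The projection `π²₇(α) = (α + *₈(Φ ∧ α))/4` onto `Λ²₇`. -/
def pi27 (α : Form K 8) : Form K 8 := (4 : K)⁻¹ • (α + hstar (wedge Phi8 α))

/-- The projection `π⁴₇(β) = Σ_{μ=1}^{7} ⟨β, λ⁴(e^μ)⟩ λ⁴(e^μ)` onto `Λ⁴₇`. -/
def pi47 (β : Form K 8) : Form K 8 :=
  ∑ μ : Fin 7, inner' β (lambda4 (e1 μ.succ)) • lambda4 (e1 μ.succ)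

/-- `τ(u₀,u₁,u₂,u₃) = Σ_{μ=1}^{7} λ⁴(e^μ)(u₀,u₁,u₂,u₃) ⬝ λ⁴(e^μ) = π⁴₇(u₀♭∧u₁♭∧u₂♭∧u₃♭)`. -/
def tau4 (u : Fin 4 → (Fin 8 → K)) : Form K 8 :=
  ∑ μ : Fin 7, evalForm (lambda4 (e1 μ.succ)) u • lambda4 (e1 μ.succ)

/-- Partial derivative `∂f^a/∂x^j` at `x`. -/
def pd {m p : ℕ} (f : (Fin m → ℝ) → (Fin p → ℝ)) (x : Fin m → ℝ) (j : Fin m) (a : Fin p) : ℝ :=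
  fderiv ℝ f x (Pi.single j 1) a


/-! Graph setting for Cayley `T⁴`-fibrations: `ℝ⁸ = ℝ⁴ × ℝ⁴` with coordinates
`(x⁰,…,x³,y⁴,…,y⁷)`. -/

/-- The index of the coordinate `x^j` in `ℝ⁸`. -/
def xi (j : Fin 4) : Fin 8 := Fin.castAdd 4 j

/-- The index of the coordinate `y^a` (`a = 4,…,7` shifted to `0,…,3`) in `ℝ⁸`. -/
def yi (a : Fin 4) : Fin 8 := a.addNat 4

/-- The spanning tangent vectors `v_j = ∂_j + Σ_a (∂f^a/∂x^j) ∂_a` of the graph of `f`. -/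
def vG (f : (Fin 4 → ℝ) → (Fin 4 → ℝ)) (x : Fin 4 → ℝ) (j : Fin 4) : Fin 8 → ℝ :=
  Pi.single (xi j) 1 + ∑ a : Fin 4, pd f x j a • (Pi.single (yi a) 1 : Fin 8 → ℝ)

/-- The real 2-form `γ` with `F_∇^S = √-1 γ`, i.e. `γ = Σ_{j,a} (∂f^a/∂x^j) dx^j ∧ dy^a`. -/
def gammaS (f : (Fin 4 → ℝ) → (Fin 4 → ℝ)) (x : Fin 4 → ℝ) : Form ℝ 8 :=
  ∑ j : Fin 4, ∑ a : Fin 4, pd f x j a • wedge (e1 (xi j)) (e1 (yi a))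

/-- The `√-1 ℝ`-valued curvature 2-form
`F_∇^S = √-1 Σ_{j,a} (∂f^a/∂x^j) dx^j ∧ dy^a` of the real Fourier–Mukai transform. -/
def FS8 (f : (Fin 4 → ℝ) → (Fin 4 → ℝ)) (x : Fin 4 → ℝ) : Form ℂ 8 :=
  fun s => Complex.I * (gammaS f x s : ℂ)

/-! Let `γ_A = ∑ A j a dxʲ ∧ dyᵃ`. The coefficients of the wedge powers of `γ_A` are, up to sign
and factorials, the minors of `A`; in particular `*γ_A³ = 6 γ_C` with `C` the cofactor matrix of
`A`, and `*γ_A⁴ = 24 det A`. On the other side, `1 + γ_A♯` is, up to transposition, the block matrix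
`[[1, A], [-Aᵀ, 1]]`, whose determinant is the sum of the squares of all minors of `A`. The forms
`Φ` and `λ⁴(e^μ)` see `Λ²A` only through the self-dual 2-forms of the two factors `ℝ⁴`. With
`t = -½⟨γ_A², Φ⟩`, `ℓ_μ = 2⟨γ_A, λ²(e^μ)⟩` and `q_μ = -½⟨γ_A², √8 λ⁴(e^μ)⟩`, and since the norms of
forms `√-1 γ` are those of `γ`, the claim becomes
`(1 + t(A) + det A)² + ∑ ℓ_μ(A - C)² + ∑ q_μ(A)² = ∑ (minors of A)²`.
Sorted by degree in `A` this follows from `∑ ℓ_μ(A)² = |A|² - 2 t(A)`, which is applied to `C` as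
well, `t(C) = det A · t(A)`, and `|Λ²A|² = t(A)² + ∑ q_μ(A)² + 2 det A - 2 ∑ ℓ_μ(A) ℓ_μ(C)`. -/

variable {𝕜 : Type*} [NormedField 𝕜]

section ExteriorAlgebra

lemma signMerge_union_left {s t : Finset (Fin n)} (h : Disjoint s t) (u : Finset (Fin n)) :
    (signMerge (s ∪ t) u : 𝕜) = signMerge s u * signMerge t u := by
  rw [signMerge, Finset.union_product, Finset.filter_union, Finset.card_union_of_disjoint, pow_add,
    signMerge, signMerge]
  exact Finset.disjoint_filter_filter (Finset.disjoint_product.mpr (Or.inl h))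

lemma signMerge_union_right (s : Finset (Fin n)) {t u : Finset (Fin n)} (h : Disjoint t u) :
    (signMerge s (t ∪ u) : 𝕜) = signMerge s t * signMerge s u := by
  rw [signMerge, Finset.product_union, Finset.filter_union, Finset.card_union_of_disjoint, pow_add,
    signMerge, signMerge]
  exact Finset.disjoint_filter_filter (Finset.disjoint_product.mpr (Or.inr h))

lemma signMerge_singleton_left (i : Fin n) (t : Finset (Fin n)) :
    (signMerge {i} t : 𝕜) = (-1) ^ (t.filter (· < i)).card := by
  rw [signMerge, Finset.singleton_product, Finset.filter_map, Finset.card_map]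
  rfl

lemma signMerge_singleton_right (s : Finset (Fin n)) (i : Fin n) :
    (signMerge s {i} : 𝕜) = (-1) ^ (s.filter (i < ·)).card := by
  rw [signMerge, Finset.product_singleton, Finset.filter_map, Finset.card_map]
  rfl

lemma signMerge_eq_prod (s t : Finset (Fin n)) :
    (signMerge s t : 𝕜) = ∏ i ∈ s, (-1) ^ (t.filter (· < i)).card := by
  simp only [signMerge, Finset.card_filter, Finset.sum_product, Finset.prod_pow_eq_pow_sum]

lemma signMerge_empty_right (s : Finset (Fin n)) : (signMerge s ∅ : 𝕜) = 1 := by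
  simp [signMerge]

lemma wedge_assoc (α β γ : Form 𝕜 n) : wedge (wedge α β) γ = wedge α (wedge β γ) := by
  funext u
  simp only [wedge, Finset.sum_mul, Finset.mul_sum]
  rw [Finset.sum_sigma', Finset.sum_sigma']
  refine Finset.sum_bij' (fun p _ => ⟨p.2, p.1 \ p.2⟩) (fun p _ => ⟨p.1 ∪ p.2, p.1⟩) ?_ ?_ ?_ ?_ ?_
  · rintro ⟨s, r⟩ h
    simp only [Finset.mem_sigma, Finset.mem_powerset] at h ⊢
    exact ⟨h.2.trans h.1, Finset.sdiff_subset_sdiff h.1 subset_rfl⟩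
  · rintro ⟨r, t⟩ h
    simp only [Finset.mem_sigma, Finset.mem_powerset] at h ⊢
    exact ⟨Finset.union_subset h.1 (h.2.trans Finset.sdiff_subset), Finset.subset_union_left⟩
  · rintro ⟨s, r⟩ h
    simp only [Finset.mem_sigma, Finset.mem_powerset] at h
    simp only [Finset.union_sdiff_of_subset h.2]
  · rintro ⟨r, t⟩ h
    simp only [Finset.mem_sigma, Finset.mem_powerset] at h
    simp only [Finset.union_sdiff_cancel_left (Finset.subset_sdiff.mp h.2).2.symm]
  · rintro ⟨s, r⟩ h
    simp only [Finset.mem_sigma, Finset.mem_powerset] at h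
    obtain ⟨t, hrt, rfl⟩ : ∃ t, Disjoint r t ∧ r ∪ t = s :=
      ⟨s \ r, Finset.disjoint_sdiff, Finset.union_sdiff_of_subset h.2⟩
    obtain ⟨w, hw, rfl⟩ : ∃ w, Disjoint (r ∪ t) w ∧ r ∪ t ∪ w = u :=
      ⟨u \ (r ∪ t), Finset.disjoint_sdiff, Finset.union_sdiff_of_subset h.1⟩
    have htw : Disjoint t w := (Finset.disjoint_union_left.mp hw).2
    have hrtw : Disjoint r (t ∪ w) :=
      Finset.disjoint_union_right.mpr ⟨hrt, (Finset.disjoint_union_left.mp hw).1⟩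
    rw [Finset.union_sdiff_cancel_left hrt, Finset.union_sdiff_cancel_left hw, Finset.union_assoc,
      Finset.union_sdiff_cancel_left hrtw, Finset.union_sdiff_cancel_left htw,
      signMerge_union_left hrt, signMerge_union_right r htw]
    ring

lemma wedge_sum_left {ι : Type*} (S : Finset ι) (α : ι → Form 𝕜 n) (β : Form 𝕜 n) :
    wedge (∑ i ∈ S, α i) β = ∑ i ∈ S, wedge (α i) β := by
  funext u
  simp only [wedge, Finset.sum_apply, Finset.mul_sum, Finset.sum_mul]
  exact Finset.sum_comm

lemma wedge_smul_left (c : 𝕜) (α β : Form 𝕜 n) : wedge (c • α) β = c • wedge α β := by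
  funext u
  simp only [wedge, Pi.smul_apply, smul_eq_mul, Finset.mul_sum]
  exact Finset.sum_congr rfl fun s _ => by ring

lemma wedge_smul_right (c : 𝕜) (α β : Form 𝕜 n) : wedge α (c • β) = c • wedge α β := by
  funext u
  simp only [wedge, Pi.smul_apply, smul_eq_mul, Finset.mul_sum]
  exact Finset.sum_congr rfl fun s _ => by ring

lemma wedge_single_apply (α : Form 𝕜 n) (t u : Finset (Fin n)) :
    wedge α (Pi.single t 1) u = if t ⊆ u then signMerge (u \ t) t * α (u \ t) else 0 := by
  split_ifs with h
  · rw [wedge, Finset.sum_eq_single_of_mem (u \ t) (Finset.mem_powerset.mpr Finset.sdiff_subset)]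
    · rw [Finset.sdiff_sdiff_eq_self h, Pi.single_eq_same, mul_one]
    · intro s hs hne
      rw [Pi.single_eq_of_ne, mul_zero]
      rintro rfl
      exact hne (Finset.sdiff_sdiff_eq_self (Finset.mem_powerset.mp hs)).symm
  · refine Finset.sum_eq_zero fun s _ => ?_
    rw [Pi.single_eq_of_ne, mul_zero]
    rintro rfl
    exact h Finset.sdiff_subset

lemma wedge_single_empty (α : Form 𝕜 n) : wedge α (Pi.single ∅ 1) = α := by
  funext u
  simp [wedge_single_apply, signMerge_empty_right]

lemma wedge_e1_apply (i : Fin n) (α : Form 𝕜 n) (u : Finset (Fin n)) :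
    wedge (e1 i) α u =
      if i ∈ u then (-1) ^ (u.filter (· < i)).card * α (u.erase i) else 0 := by
  have h : ∀ s ∈ u.powerset, s ≠ {i} →
      signMerge s (u \ s) * (e1 i : Form 𝕜 n) s * α (u \ s) = 0 := fun s _ hs => by
    simp [e1, hs]
  split_ifs with hi
  · rw [wedge, Finset.sum_eq_single {i} h (by simp [hi]), Finset.sdiff_singleton_eq_erase,
      signMerge_singleton_left, Finset.filter_erase, Finset.erase_eq_of_notMem (by simp)]
    simp [e1]
  · refine Finset.sum_eq_zero fun s hs => h s hs ?_
    rintro rfl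
    exact hi (by simpa using hs)

lemma hstar_smul (c : 𝕜) (α : Form 𝕜 n) : hstar (c • α) = c • hstar α :=
  funext fun _ => mul_left_comm _ _ _

lemma iprod_sharp1_e1 (i : Fin n) (α : Form 𝕜 n) : iprod (sharp1 (e1 i)) α = iprodB i α := by
  funext t
  simp [iprod, sharp1, e1]

end ExteriorAlgebra

section MixedForms

variable {m p : ℕ}

/-- The index set `J ⊔ I` in `ℝᵐ × ℝᵖ`, with `J` in the first and `I` in the second factor. -/
def blockSet (J : Finset (Fin m)) (I : Finset (Fin p)) : Finset (Fin (m + p)) :=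
  (J.disjSum I).map finSumFinEquiv.toEmbedding

variable {J J' : Finset (Fin m)} {I I' : Finset (Fin p)}

@[simp] lemma castAdd_mem_blockSet {j : Fin m} : Fin.castAdd p j ∈ blockSet J I ↔ j ∈ J := by
  simp [blockSet, ← finSumFinEquiv_apply_left]

@[simp] lemma natAdd_mem_blockSet {a : Fin p} : Fin.natAdd m a ∈ blockSet J I ↔ a ∈ I := by
  simp [blockSet, ← finSumFinEquiv_apply_right]

lemma finset_ext_blocks {s t : Finset (Fin (m + p))}
    (hl : ∀ j, Fin.castAdd p j ∈ s ↔ Fin.castAdd p j ∈ t)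
    (hr : ∀ a, Fin.natAdd m a ∈ s ↔ Fin.natAdd m a ∈ t) : s = t := by
  ext i
  exact Fin.addCases hl hr i

lemma sum_eq_sum_blockSet {M : Type*} [AddCommMonoid M] (F : Finset (Fin (m + p)) → M) :
    ∑ s, F s = ∑ J, ∑ I, F (blockSet J I) := by
  rw [← Fintype.sum_prod_type']
  exact (Equiv.sum_comp
    (Finset.sumEquiv.symm.toEquiv.trans finSumFinEquiv.finsetCongr) F).symm

lemma exists_eq_blockSet (s : Finset (Fin (m + p))) : ∃ J I, s = blockSet J I :=
  ⟨_, _, ((Finset.sumEquiv.symm.toEquiv.trans finSumFinEquiv.finsetCongr).apply_symm_apply s).symm⟩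

lemma card_blockSet : (blockSet J I).card = J.card + I.card := by
  simp [blockSet]

@[simp] lemma blockSet_eq_empty : blockSet J I = ∅ ↔ J = ∅ ∧ I = ∅ := by
  simp [blockSet]

lemma compl_blockSet : (blockSet J I)ᶜ = blockSet Jᶜ Iᶜ :=
  finset_ext_blocks (by simp) (by simp)

lemma castAdd_lt_natAdd (j : Fin m) (a : Fin p) : Fin.castAdd p j < Fin.natAdd m a := by
  rw [Fin.lt_def, Fin.val_castAdd, Fin.val_natAdd]
  omega

@[simp] lemma castAdd_ne_natAdd (j : Fin m) (a : Fin p) : Fin.castAdd p j ≠ Fin.natAdd m a :=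
  (castAdd_lt_natAdd j a).ne

@[simp] lemma natAdd_ne_castAdd (a : Fin p) (j : Fin m) : Fin.natAdd m a ≠ Fin.castAdd p j :=
  (castAdd_ne_natAdd j a).symm

lemma blockSet_erase_castAdd (j : Fin m) :
    (blockSet J I).erase (Fin.castAdd p j) = blockSet (J.erase j) I :=
  finset_ext_blocks (by simp) (by simp)

lemma blockSet_erase_natAdd (a : Fin p) :
    (blockSet J I).erase (Fin.natAdd m a) = blockSet J (I.erase a) :=
  finset_ext_blocks (by simp) (by simp)

lemma blockSet_filter_lt_castAdd (j : Fin m) :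
    (blockSet J I).filter (· < Fin.castAdd p j) = blockSet (J.filter (· < j)) ∅ :=
  finset_ext_blocks (by simp [(Fin.strictMono_castAdd p).lt_iff_lt])
    (by simp [(castAdd_lt_natAdd _ _).le])

lemma blockSet_filter_lt_natAdd (a : Fin p) :
    (blockSet J I).filter (· < Fin.natAdd m a) = blockSet J (I.filter (· < a)) :=
  finset_ext_blocks (by simp [castAdd_lt_natAdd]) (by simp)

lemma prod_blockSet {M : Type*} [CommMonoid M] (F : Fin (m + p) → M) :
    ∏ i ∈ blockSet J I, F i = (∏ j ∈ J, F (Fin.castAdd p j)) * ∏ a ∈ I, F (Fin.natAdd m a) := by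
  rw [blockSet, Finset.prod_map, Finset.prod_disjSum]
  rfl

lemma signMerge_blockSet :
    (signMerge (blockSet J I) (blockSet J' I') : 𝕜) =
      (-1) ^ (I.card * J'.card) * signMerge J J' * signMerge I I' := by
  simp only [signMerge_eq_prod, prod_blockSet, blockSet_filter_lt_castAdd,
    blockSet_filter_lt_natAdd, card_blockSet, Finset.card_empty, add_zero, pow_add,
    Finset.prod_mul_distrib, Finset.prod_const, ← pow_mul]
  ring

/-- The mixed 2-form `∑ A j a dxʲ ∧ dyᵃ` on `ℝᵐ × ℝᵖ` with coefficient matrix `A`. -/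
def mixedForm (A : Matrix (Fin m) (Fin p) 𝕜) : Form 𝕜 (m + p) :=
  ∑ j, ∑ a, A j a • wedge (e1 (Fin.castAdd p j)) (e1 (Fin.natAdd m a))

lemma mixedForm_sub (A B : Matrix (Fin m) (Fin p) 𝕜) :
    mixedForm (A - B) = mixedForm A - mixedForm B := by
  simp only [mixedForm, Matrix.sub_apply, sub_smul, Finset.sum_sub_distrib]

lemma wedge_mixedForm_blockSet (A : Matrix (Fin m) (Fin p) 𝕜) (β : Form 𝕜 (m + p)) :
    wedge (mixedForm A) β (blockSet J I) =
      ∑ j ∈ J, ∑ a ∈ I, (-1) ^ (J.erase j).card *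
        ((-1) ^ ((J.filter (· < j)).card + (I.filter (· < a)).card) * A j a *
          β (blockSet (J.erase j) (I.erase a))) := by
  simp only [mixedForm, wedge_sum_left, wedge_smul_left, wedge_assoc, Finset.sum_apply,
    Pi.smul_apply, wedge_e1_apply, castAdd_mem_blockSet, natAdd_mem_blockSet,
    blockSet_erase_castAdd, blockSet_erase_natAdd, blockSet_filter_lt_castAdd,
    blockSet_filter_lt_natAdd, card_blockSet, smul_ite, mul_ite, smul_zero, mul_zero,
    Finset.card_empty, add_zero]
  rw [← Finset.sum_subset (Finset.subset_univ J) fun j _ hj => by simp [hj]]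
  refine Finset.sum_congr rfl fun j hj => ?_
  simp only [hj, if_true, Finset.sum_ite_mem, Finset.univ_inter, smul_eq_mul]
  exact Finset.sum_congr rfl fun a _ => by ring

end MixedForms

section Minors

variable {ι κ R : Type*} [LinearOrder ι] [LinearOrder κ] [CommRing R]

/-- The minor of `A` on the rows `J` and the columns `I`, set to `0` when these sets have
different sizes. -/
def minor (A : Matrix ι κ R) (J : Finset ι) (I : Finset κ) : R :=
  if h : I.card = J.card then
    (A.submatrix (J.orderEmbOfFin rfl) (I.orderEmbOfFin h)).det
  else 0

lemma minor_of_card_ne (A : Matrix ι κ R) {J : Finset ι} {I : Finset κ} (h : I.card ≠ J.card) :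
    minor A J I = 0 :=
  dif_neg h

lemma minor_eq_det {k : ℕ} (A : Matrix ι κ R) {J : Finset ι} {I : Finset κ} (hJ : J.card = k)
    (hI : I.card = k) :
    minor A J I = (A.submatrix (J.orderEmbOfFin hJ) (I.orderEmbOfFin hI)).det := by
  subst hJ
  exact dif_pos hI

lemma sum_eq_sum_orderEmbOfFin {M : Type*} [AddCommMonoid M] {k : ℕ} {J : Finset ι}
    (hJ : J.card = k) (F : ι → M) : ∑ j ∈ J, F j = ∑ i, F (J.orderEmbOfFin hJ i) := by
  conv_lhs => rw [← J.map_orderEmbOfFin_univ hJ, Finset.sum_map]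
  rfl

lemma card_filter_lt_orderEmbOfFin {k : ℕ} {J : Finset ι} (hJ : J.card = k) (i : Fin k) :
    (J.filter (· < J.orderEmbOfFin hJ i)).card = i := by
  have : J.filter (· < J.orderEmbOfFin hJ i) =
      (Finset.Iio i).map (J.orderEmbOfFin hJ).toEmbedding := by
    ext x
    constructor
    · intro hx
      obtain ⟨hxJ, hxi⟩ := Finset.mem_filter.mp hx
      obtain ⟨r, rfl⟩ : ∃ r, J.orderEmbOfFin hJ r = x := by
        rwa [← Set.mem_range, Finset.range_orderEmbOfFin]
      simpa using hxi
    · intro hx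
      obtain ⟨r, hr, rfl⟩ := Finset.mem_map.mp hx
      simpa using hr
  rw [this, Finset.card_map, Fin.card_Iio]

lemma orderEmbOfFin_erase {k : ℕ} {J : Finset ι} (hJ : J.card = k + 1) (i : Fin (k + 1))
    (h : (J.erase (J.orderEmbOfFin hJ i)).card = k) :
    ⇑((J.erase (J.orderEmbOfFin hJ i)).orderEmbOfFin h) = J.orderEmbOfFin hJ ∘ i.succAbove :=
  .symm <| Finset.orderEmbOfFin_unique h (fun r => by simp)
    ((J.orderEmbOfFin hJ).strictMono.comp i.strictMono_succAbove)

lemma minor_eq_sum_row (A : Matrix ι κ R) {J : Finset ι} {j : ι} (hj : j ∈ J) (I : Finset κ) :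
    minor A J I = ∑ a ∈ I,
      (-1) ^ ((J.filter (· < j)).card + (I.filter (· < a)).card) * A j a *
        minor A (J.erase j) (I.erase a) := by
  obtain ⟨k, hJ⟩ : ∃ k, J.card = k + 1 :=
    Nat.exists_eq_succ_of_ne_zero (Finset.card_ne_zero_of_mem hj)
  by_cases hI : I.card = k + 1
  · obtain ⟨i, rfl⟩ : ∃ i, J.orderEmbOfFin hJ i = j := by
      rwa [← Set.mem_range, Finset.range_orderEmbOfFin]
    rw [minor_eq_det A hJ hI, Matrix.det_succ_row _ i, sum_eq_sum_orderEmbOfFin hI]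
    refine Finset.sum_congr rfl fun c _ => ?_
    have hJc : (J.erase (J.orderEmbOfFin hJ i)).card = k := by simp [hJ]
    have hIc : (I.erase (I.orderEmbOfFin hI c)).card = k := by simp [hI]
    rw [card_filter_lt_orderEmbOfFin, card_filter_lt_orderEmbOfFin, minor_eq_det A hJc hIc,
      orderEmbOfFin_erase, orderEmbOfFin_erase, Matrix.submatrix_submatrix, Matrix.submatrix_apply]
  · rw [minor_of_card_ne A (by omega)]
    refine (Finset.sum_eq_zero fun a ha => ?_).symm
    rw [minor_of_card_ne, mul_zero]
    rw [Finset.card_erase_of_mem ha, Finset.card_erase_of_mem hj]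
    have := Finset.card_pos.mpr ⟨a, ha⟩
    omega

lemma minor_empty (A : Matrix ι κ R) : minor A ∅ ∅ = 1 := by
  rw [minor_eq_det A (k := 0) rfl rfl, Matrix.det_isEmpty]

lemma minor_singleton (A : Matrix ι κ R) (j : ι) (a : κ) : minor A {j} {a} = A j a := by
  simp [minor_eq_sum_row A (Finset.mem_singleton_self j), minor_empty, Finset.filter_singleton]

lemma minor_pair (A : Matrix ι κ R) {j k : ι} {a b : κ} (hjk : j < k) (hab : a < b) :
    minor A {j, k} {a, b} = A j a * A k b - A j b * A k a := by
  have hJ : ({j, k} : Finset ι).erase j = {k} := by simp [hjk.ne]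
  have hIa : ({a, b} : Finset κ).erase a = {b} := by simp [hab.ne]
  have hIb : ({a, b} : Finset κ).erase b = {a} := by
    rw [Finset.pair_comm]
    simp [hab.ne']
  rw [minor_eq_sum_row A (Finset.mem_insert_self j {k}), Finset.sum_pair hab.ne, hJ, hIa, hIb]
  simp [minor_singleton, Finset.filter_insert, Finset.filter_singleton, hjk.not_gt, hab, hab.not_gt,
    sub_eq_add_neg]

lemma minor_univ {m : ℕ} (A : Matrix (Fin m) (Fin m) R) :
    minor A Finset.univ Finset.univ = A.det := by
  have h : ⇑(Finset.univ.orderEmbOfFin (Finset.card_fin m)) = id :=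
    (Finset.orderEmbOfFin_unique _ (fun _ => Finset.mem_univ _) strictMono_id).symm
  rw [minor_eq_det A (Finset.card_fin m) (Finset.card_fin m), h, Matrix.submatrix_id_id]

lemma minor_compl_singleton {m : ℕ} (A : Matrix (Fin (m + 1)) (Fin (m + 1)) R)
    (j a : Fin (m + 1)) :
    minor A {j}ᶜ {a}ᶜ = (A.submatrix j.succAbove a.succAbove).det := by
  rw [minor_eq_det A (k := m) (by simp [Finset.card_compl]) (by simp [Finset.card_compl]),
    Finset.orderEmbOfFin_compl_singleton_eq_succAboveOrderEmb,
    Finset.orderEmbOfFin_compl_singleton_eq_succAboveOrderEmb]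
  rfl

end Minors

section PowersOfMixedForms

variable {m p : ℕ}

lemma wedge_mixedForm_iterate_blockSet (A : Matrix (Fin m) (Fin p) 𝕜) (k : ℕ) :
    ∀ (J : Finset (Fin m)) (I : Finset (Fin p)),
      (wedge (mixedForm A))^[k] (Pi.single ∅ 1) (blockSet J I) =
        if J.card = k then (-1) ^ k.choose 2 * k.factorial * minor A J I else 0 := by
  induction k with
  | zero =>
    intro J I
    rw [Function.iterate_zero_apply, Pi.single_apply]
    by_cases hJ : J = ∅
    · by_cases hI : I = ∅
      · simp [hJ, hI, minor_empty]
      · rw [minor_of_card_ne A (by simpa [hJ] using hI)]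
        simp [hJ, hI]
    · simp [hJ]
  | succ k ih =>
    intro J I
    have hcard : ∀ j ∈ J, (J.erase j).card = k ↔ J.card = k + 1 := fun j hj => by
      have := Finset.card_pos.mpr ⟨j, hj⟩
      rw [Finset.card_erase_of_mem hj]
      omega
    rw [Function.iterate_succ_apply', wedge_mixedForm_blockSet]
    simp only [ih]
    split_ifs with hJ
    · calc
        _ = ∑ j ∈ J, (-1) ^ k * ((-1) ^ k.choose 2 * k.factorial) * minor A J I := by
          refine Finset.sum_congr rfl fun j hj => ?_
          rw [minor_eq_sum_row A hj I, Finset.mul_sum]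
          refine Finset.sum_congr rfl fun a _ => ?_
          rw [if_pos ((hcard j hj).mpr hJ), (hcard j hj).mpr hJ]
          ring
        _ = _ := by
          rw [Finset.sum_const, hJ, Nat.choose_succ_succ' k 1, Nat.choose_one_right,
            Nat.factorial_succ, nsmul_eq_mul]
          push_cast
          ring
    · refine Finset.sum_eq_zero fun j hj => Finset.sum_eq_zero fun a _ => ?_
      rw [if_neg (mt (hcard j hj).mp hJ), mul_zero, mul_zero]

lemma wedge_mixedForm_iterate_eq_zero (A : Matrix (Fin m) (Fin p) 𝕜) {k : ℕ} {J : Finset (Fin m)}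
    {I : Finset (Fin p)} (h : ¬ (J.card = k ∧ I.card = k)) :
    (wedge (mixedForm A))^[k] (Pi.single ∅ 1) (blockSet J I) = 0 := by
  rw [wedge_mixedForm_iterate_blockSet]
  split_ifs with hJ
  · rw [minor_of_card_ne A fun hI => h ⟨hJ, hI.trans hJ⟩, mul_zero]
  · rfl

lemma mixedForm_eq_iterate (A : Matrix (Fin m) (Fin p) 𝕜) :
    mixedForm A = (wedge (mixedForm A))^[1] (Pi.single ∅ 1) := by
  rw [Function.iterate_one, wedge_single_empty]

lemma mixedForm_blockSet_singleton (A : Matrix (Fin m) (Fin p) 𝕜) (j : Fin m) (a : Fin p) :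
    mixedForm A (blockSet {j} {a}) = A j a := by
  rw [mixedForm_eq_iterate, wedge_mixedForm_iterate_blockSet]
  simp [minor_singleton]

lemma mixedForm_blockSet_eq_zero (A : Matrix (Fin m) (Fin p) 𝕜) {J : Finset (Fin m)}
    {I : Finset (Fin p)} (h : ¬ (J.card = 1 ∧ I.card = 1)) :
    mixedForm A (blockSet J I) = 0 := by
  rw [mixedForm_eq_iterate, wedge_mixedForm_iterate_eq_zero A h]

lemma hstar_blockSet (ω : Form 𝕜 (m + p)) (J : Finset (Fin m)) (I : Finset (Fin p)) :
    hstar ω (blockSet J I) =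
      (-1) ^ (Iᶜ.card * J.card) * signMerge Jᶜ J * signMerge Iᶜ I * ω (blockSet Jᶜ Iᶜ) := by
  rw [hstar, compl_blockSet, signMerge_blockSet]

lemma signMerge_compl_singleton (j : Fin (m + 1)) :
    (signMerge {j}ᶜ {j} : 𝕜) = (-1) ^ (m + j) := by
  have h : ({j}ᶜ : Finset (Fin (m + 1))).filter (j < ·) = Finset.Ioi j := by
    ext i
    simpa using ne_of_gt
  obtain ⟨r, hr⟩ := Nat.exists_eq_add_of_le (Nat.lt_succ_iff.mp j.is_lt)
  rw [signMerge_singleton_right, h, Fin.card_Ioi, neg_one_pow_eq_pow_mod_two,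
    neg_one_pow_eq_pow_mod_two (m + j)]
  congr 1
  omega

lemma hstar_wedge_mixedForm_iterate (A : Matrix (Fin (m + 1)) (Fin (m + 1)) 𝕜) :
    hstar ((wedge (mixedForm A))^[m] (Pi.single ∅ 1)) =
      ((-1) ^ (m + 1).choose 2 * m.factorial : 𝕜) • mixedForm A.adjugate.transpose := by
  funext s
  obtain ⟨J, I, rfl⟩ := exists_eq_blockSet s
  rw [hstar_blockSet, Pi.smul_apply, smul_eq_mul]
  by_cases h : J.card = 1 ∧ I.card = 1
  · obtain ⟨⟨j, rfl⟩, ⟨a, rfl⟩⟩ := And.imp Finset.card_eq_one.mp Finset.card_eq_one.mp h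
    have hcard (i : Fin (m + 1)) : ({i}ᶜ : Finset (Fin (m + 1))).card = m := by
      simp [Finset.card_compl]
    have hsign : (-1 : 𝕜) ^ m * (-1) ^ (m + j) * (-1) ^ (m + a) * (-1) ^ m.choose 2 =
        (-1) ^ (m + 1).choose 2 * (-1) ^ (a + j : ℕ) := by
      rw [Nat.choose_succ_succ' m 1, Nat.choose_one_right, one_add_one_eq_two,
        ← pow_add, ← pow_add, ← pow_add, ← pow_add, neg_one_pow_eq_pow_mod_two,
        neg_one_pow_eq_pow_mod_two (_ + (a + j : ℕ))]
      congr 1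
      omega
    rw [wedge_mixedForm_iterate_blockSet, if_pos (hcard j), mixedForm_blockSet_singleton,
      minor_compl_singleton, signMerge_compl_singleton, signMerge_compl_singleton,
      Matrix.transpose_apply, Matrix.adjugate_fin_succ_eq_det_submatrix, hcard,
      Finset.card_singleton, mul_one]
    linear_combination m.factorial * (A.submatrix j.succAbove a.succAbove).det * hsign
  · have hcompl : ¬ (Jᶜ.card = m ∧ Iᶜ.card = m) := by
      have hJ := J.card_compl_add_card
      have hI := I.card_compl_add_card
      rw [Fintype.card_fin] at hJ hI
      omega
    rw [wedge_mixedForm_iterate_eq_zero A hcompl, mixedForm_blockSet_eq_zero _ h, mul_zero,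
      mul_zero]

lemma hstar_wedge_mixedForm_iterate_empty (A : Matrix (Fin m) (Fin m) 𝕜) :
    hstar ((wedge (mixedForm A))^[m] (Pi.single ∅ 1)) ∅ =
      (-1) ^ m.choose 2 * m.factorial * A.det := by
  have h := hstar_blockSet ((wedge (mixedForm A))^[m] (Pi.single ∅ 1)) ∅ ∅
  rw [wedge_mixedForm_iterate_blockSet, if_pos (by simp), blockSet_eq_empty.mpr ⟨rfl, rfl⟩] at h
  simpa [minor_univ, signMerge_empty_right] using h

end PowersOfMixedForms

section Determinants

variable {ι κ R : Type*} [CommRing R]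

lemma det_submatrix_coe_of_range_eq [Fintype κ] [DecidableEq ι] [DecidableEq κ] (M : Matrix ι ι R)
    {s : Finset ι} {f : κ → ι} (hf : f.Injective) (hs : Set.range f = s) :
    (M.submatrix (↑) (↑) : Matrix s s R).det = (M.submatrix f f).det := by
  let e : κ ≃ s := (Equiv.ofInjective f hf).trans (Equiv.setCongr hs)
  rw [← Matrix.det_submatrix_equiv_self e, Matrix.submatrix_submatrix]
  rfl

lemma det_principal_fromBlocks_zero [LinearOrder ι] [LinearOrder κ] (B : Matrix ι κ R)
    (C : Matrix κ ι R) {k l : ℕ} {J : Finset ι} {I : Finset κ} (hJ : J.card = k)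
    (hI : I.card = l) :
    ((Matrix.fromBlocks 0 B C 0).submatrix (↑) (↑) :
        Matrix (J.disjSum I) (J.disjSum I) R).det =
      (Matrix.fromBlocks 0 (B.submatrix (J.orderEmbOfFin hJ) (I.orderEmbOfFin hI))
        (C.submatrix (I.orderEmbOfFin hI) (J.orderEmbOfFin hJ)) 0).det := by
  have hf := Set.ext_iff.mp (J.range_orderEmbOfFin hJ)
  have hg := Set.ext_iff.mp (I.range_orderEmbOfFin hI)
  have hrange : Set.range (Sum.map (J.orderEmbOfFin hJ) (I.orderEmbOfFin hI)) =
      (J.disjSum I : Finset (ι ⊕ κ)) := by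
    simp only [Set.mem_range, SetLike.mem_coe] at hf hg
    ext (j | a) <;> simp [hf, hg]
  rw [det_submatrix_coe_of_range_eq _
    ((J.orderEmbOfFin hJ).injective.sumMap (I.orderEmbOfFin hI).injective) hrange]
  congr 1
  ext (_ | _) (_ | _) <;> rfl

variable [Fintype ι] [Fintype κ]

lemma det_one_add_eq_sum_principal [DecidableEq ι] (M : Matrix ι ι R) :
    (1 + M).det = ∑ s : Finset ι, (M.submatrix (↑) (↑) : Matrix s s R).det := by
  rw [add_comm]
  refine (Matrix.detRowAlternating.map_add_univ M.row (1 : Matrix ι ι R).row).trans ?_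
  exact Finset.sum_congr rfl fun s _ => M.det_piecewise_one_eq_submatrix_det s

lemma det_fromBlocks_zero_neg_transpose [DecidableEq ι] (B : Matrix ι ι R) :
    (Matrix.fromBlocks 0 B (-B.transpose) 0).det = B.det ^ 2 := by
  have hJ : (Matrix.J ι R).det = 1 := SymplecticGroup.det_eq_one (SymplecticGroup.J_mem ι R)
  have h : Matrix.fromBlocks 0 B (-B.transpose) 0 =
      Matrix.fromBlocks (-B) 0 0 (-B).transpose * Matrix.J ι R := by
    simp [Matrix.J, Matrix.fromBlocks_multiply]
  rw [h, Matrix.det_mul, hJ, mul_one, Matrix.det_fromBlocks_zero₂₁, Matrix.det_transpose, ← sq,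
    Matrix.det_neg, mul_pow, ← pow_mul, Even.neg_one_pow (even_two.mul_left _), one_mul]

/-- Doubling the first block of rows has the same effect as doubling the second block of
columns, so `2 ^ |ι| * det = 2 ^ |κ| * det`. -/
lemma det_fromBlocks_zero_eq_zero [DecidableEq ι] [DecidableEq κ] [IsDomain R] [CharZero R]
    (B : Matrix ι κ R) (C : Matrix κ ι R) (h : Fintype.card ι ≠ Fintype.card κ) :
    (Matrix.fromBlocks 0 B C 0).det = 0 := by
  have hcomm : Matrix.fromBlocks ((2 : R) • 1) 0 0 1 * Matrix.fromBlocks 0 B C 0 =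
      Matrix.fromBlocks 0 B C 0 * Matrix.fromBlocks 1 0 0 ((2 : R) • 1) := by
    simp [Matrix.fromBlocks_multiply]
  have hdet := congrArg Matrix.det hcomm
  simp only [Matrix.det_mul, Matrix.det_fromBlocks_zero₂₁, Matrix.det_smul, Matrix.det_one,
    mul_one, one_mul] at hdet
  rw [mul_comm, mul_eq_mul_left_iff] at hdet
  refine hdet.resolve_left fun h2 => h (Nat.pow_right_injective le_rfl ?_)
  exact_mod_cast h2

lemma det_fromBlocks_one_neg_transpose [LinearOrder ι] [LinearOrder κ] [IsDomain R] [CharZero R]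
    (A : Matrix ι κ R) :
    (Matrix.fromBlocks 1 A (-A.transpose) 1).det =
      ∑ J : Finset ι, ∑ I : Finset κ, minor A J I ^ 2 := by
  have hadd : Matrix.fromBlocks 1 A (-A.transpose) 1 =
      1 + Matrix.fromBlocks 0 A (-A.transpose) 0 := by
    rw [← Matrix.fromBlocks_one, Matrix.fromBlocks_add]
    simp only [add_zero, zero_add]
  rw [hadd, det_one_add_eq_sum_principal, ← Fintype.sum_prod_type',
    ← Equiv.sum_comp Finset.sumEquiv.symm.toEquiv]
  refine Finset.sum_congr rfl fun ⟨J, I⟩ _ => ?_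
  by_cases h : I.card = J.card
  · rw [minor_eq_det A rfl h, ← det_fromBlocks_zero_neg_transpose]
    exact det_principal_fromBlocks_zero _ _ rfl h
  · rw [minor_of_card_ne A h, zero_pow two_ne_zero]
    refine (det_principal_fromBlocks_zero _ _ rfl rfl).trans (det_fromBlocks_zero_eq_zero _ _ ?_)
    simpa using Ne.symm h

variable {m p : ℕ}

lemma one_add_mat2_mixedForm (A : Matrix (Fin m) (Fin p) 𝕜) :
    (1 + mat2 (mixedForm A)).submatrix finSumFinEquiv finSumFinEquiv =
      Matrix.fromBlocks 1 A (-A.transpose) 1 := by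
  have hl (j k : Fin m) : ({Fin.castAdd p j, Fin.castAdd p k} : Finset (Fin (m + p))) =
      blockSet {j, k} ∅ :=
    finset_ext_blocks (by simp) (by simp)
  have hr (a b : Fin p) : ({Fin.natAdd m a, Fin.natAdd m b} : Finset (Fin (m + p))) =
      blockSet ∅ {a, b} :=
    finset_ext_blocks (by simp) (by simp)
  have hlr (j : Fin m) (a : Fin p) : ({Fin.castAdd p j, Fin.natAdd m a} : Finset (Fin (m + p))) =
      blockSet {j} {a} :=
    finset_ext_blocks (by simp) (by simp)
  have hrl (a : Fin p) (j : Fin m) : ({Fin.natAdd m a, Fin.castAdd p j} : Finset (Fin (m + p))) =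
      blockSet {j} {a} := by
    rw [Finset.pair_comm, hlr]
  ext (j | a) (k | b)
  · simp [mat2, hl, mixedForm_blockSet_eq_zero, Matrix.one_apply]
  · simp [mat2, hlr, mixedForm_blockSet_singleton, castAdd_lt_natAdd]
  · simp [mat2, hrl, mixedForm_blockSet_singleton, castAdd_lt_natAdd,
      (castAdd_lt_natAdd _ _).not_gt]
  · simp [mat2, hr, mixedForm_blockSet_eq_zero, Matrix.one_apply]

lemma det_one_add_mat2_mixedForm [CharZero 𝕜] (A : Matrix (Fin m) (Fin p) 𝕜) :
    (1 + mat2 (mixedForm A)).det = ∑ J, ∑ I, minor A J I ^ 2 := by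
  rw [← det_fromBlocks_one_neg_transpose, ← one_add_mat2_mixedForm,
    Matrix.det_submatrix_equiv_self]

end Determinants

section Grading

lemma isGrade_add {k : ℕ} {α β : Form 𝕜 n} (hα : isGrade k α) (hβ : isGrade k β) :
    isGrade k (α + β) := fun s hs => by
  rw [Pi.add_apply, hα s hs, hβ s hs, add_zero]

lemma isGrade_sub {k : ℕ} {α β : Form 𝕜 n} (hα : isGrade k α) (hβ : isGrade k β) :
    isGrade k (α - β) := fun s hs => by
  rw [Pi.sub_apply, hα s hs, hβ s hs, sub_zero]

lemma isGrade_smul {k : ℕ} (c : 𝕜) {α : Form 𝕜 n} (hα : isGrade k α) : isGrade k (c • α) :=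
  fun s hs => by rw [Pi.smul_apply, hα s hs, smul_zero]

lemma isGrade_e1 (i : Fin n) : isGrade 1 (e1 i : Form 𝕜 n) := fun s hs =>
  if_neg fun h : s = {i} => hs (h ▸ Finset.card_singleton i)

lemma isGrade_wedge {k l : ℕ} {α β : Form 𝕜 n} (hα : isGrade k α) (hβ : isGrade l β) :
    isGrade (k + l) (wedge α β) := fun u hu => by
  refine Finset.sum_eq_zero fun s hs => ?_
  by_cases hk : s.card = k
  · rw [hβ, mul_zero]
    have := Finset.card_sdiff_add_card_eq_card (Finset.mem_powerset.mp hs)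
    omega
  · rw [hα s hk, mul_zero, zero_mul]

lemma isGrade_hstar {k : ℕ} {α : Form 𝕜 n} (hα : isGrade k α) : isGrade (n - k) (hstar α) :=
  fun s hs => by
    rw [hstar, hα, mul_zero]
    have := s.card_compl_add_card
    rw [Fintype.card_fin] at this
    omega

lemma isGrade_iprodB {k : ℕ} {α : Form 𝕜 n} (hα : isGrade (k + 1) α) (i : Fin n) :
    isGrade k (iprodB i α) := fun s hs => by
  rw [iprodB]
  split_ifs with hi
  · rfl
  · rw [hα, mul_zero]
    rw [Finset.card_insert_of_notMem hi]
    omega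

lemma isGrade_mixedForm {m p : ℕ} (A : Matrix (Fin m) (Fin p) 𝕜) : isGrade 2 (mixedForm A) :=
  fun s hs => by
    obtain ⟨J, I, rfl⟩ := exists_eq_blockSet s
    refine mixedForm_blockSet_eq_zero A fun h => hs ?_
    rw [card_blockSet, h.1, h.2]

lemma inner'_eq_sum_powersetCard {k : ℕ} {α : Form 𝕜 n} (hα : isGrade k α) (β : Form 𝕜 n) :
    inner' α β = ∑ s ∈ Finset.powersetCard k Finset.univ, α s * β s := by
  refine (Finset.sum_subset (Finset.subset_univ _) fun s _ hs => ?_).symm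
  rw [hα s fun h => hs (Finset.mem_powersetCard_univ.mpr h), zero_mul]

lemma eq_sum_single_of_isGrade {k : ℕ} {α : Form 𝕜 n} (hα : isGrade k α) :
    α = ∑ s ∈ Finset.powersetCard k Finset.univ, α s • Pi.single s 1 := by
  funext t
  by_cases ht : t.card = k
  · simp [Finset.sum_apply, Pi.single_apply, ht]
  · simp [Finset.sum_apply, Pi.single_apply, ht, hα t ht]

end Grading

section ChangeOfScalars

variable {𝕃 : Type*} [NormedField 𝕃] (σ : 𝕜 →+* 𝕃)

/-- Extension of scalars of a form along `σ`. It complexifies real forms, and it transports the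
coefficients of the `Spin(7)`-structure, which the kernel can evaluate over `ℚ`, to `𝕜`. -/
def mapForm (α : Form 𝕜 n) : Form 𝕃 n := fun s => σ (α s)

lemma mapForm_add (α β : Form 𝕜 n) : mapForm σ (α + β) = mapForm σ α + mapForm σ β :=
  funext fun _ => map_add σ _ _

lemma mapForm_sub (α β : Form 𝕜 n) : mapForm σ (α - β) = mapForm σ α - mapForm σ β :=
  funext fun _ => map_sub σ _ _

lemma mapForm_smul (c : 𝕜) (α : Form 𝕜 n) : mapForm σ (c • α) = σ c • mapForm σ α :=
  funext fun _ => map_mul σ _ _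

lemma map_signMerge (s t : Finset (Fin n)) : σ (signMerge s t) = signMerge s t := by
  simp [signMerge]

lemma mapForm_wedge (α β : Form 𝕜 n) :
    mapForm σ (wedge α β) = wedge (mapForm σ α) (mapForm σ β) := by
  funext u
  simp only [mapForm, wedge, map_sum, map_mul, map_signMerge]

lemma wedge_smul_mapForm (a b : 𝕃) (α β : Form 𝕜 n) :
    wedge (a • mapForm σ α) (b • mapForm σ β) = (a * b) • mapForm σ (wedge α β) := by
  rw [wedge_smul_left, wedge_smul_right, smul_smul, mapForm_wedge]

lemma mapForm_hstar (α : Form 𝕜 n) : mapForm σ (hstar α) = hstar (mapForm σ α) := by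
  funext s
  simp only [mapForm, hstar, map_mul, map_signMerge]

lemma mapForm_iprodB (i : Fin n) (α : Form 𝕜 n) :
    mapForm σ (iprodB i α) = iprodB i (mapForm σ α) := by
  funext s
  simp [mapForm, iprodB, apply_ite σ]

lemma mapForm_e1 (i : Fin n) : mapForm σ (e1 i) = e1 i := by
  funext s
  simp [mapForm, e1, apply_ite σ]

lemma map_inner' (α β : Form 𝕜 n) : σ (inner' α β) = inner' (mapForm σ α) (mapForm σ β) := by
  simp only [inner', mapForm, map_sum, map_mul]

lemma mapForm_phi8 : mapForm σ phi8 = phi8 := by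
  funext s
  unfold mapForm phi8
  split_ifs <;> simp

lemma mapForm_psi8 : mapForm σ psi8 = psi8 := by
  funext s
  unfold mapForm psi8
  split_ifs <;> simp

lemma mapForm_Phi8 : mapForm σ Phi8 = Phi8 := by
  rw [Phi8, mapForm_add, mapForm_wedge, mapForm_e1, mapForm_phi8, mapForm_psi8, Phi8]

lemma mapForm_pi27 (α : Form 𝕜 8) : mapForm σ (pi27 α) = pi27 (mapForm σ α) := by
  rw [pi27, mapForm_smul, mapForm_add, mapForm_hstar, mapForm_wedge, mapForm_Phi8, map_inv₀,
    map_ofNat, pi27]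

end ChangeOfScalars

section Spin7

lemma isGrade_phi8 : isGrade 3 (phi8 : Form 𝕜 8) := fun s hs => by
  unfold phi8
  split_ifs <;> first | rfl | exact absurd (by subst s; rfl) hs

lemma isGrade_psi8 : isGrade 4 (psi8 : Form 𝕜 8) := fun s hs => by
  unfold psi8
  split_ifs <;> first | rfl | exact absurd (by subst s; rfl) hs

lemma isGrade_Phi8 : isGrade 4 (Phi8 : Form 𝕜 8) :=
  isGrade_add (isGrade_wedge (isGrade_e1 0) isGrade_phi8) isGrade_psi8

lemma isGrade_pi27 {α : Form 𝕜 8} (hα : isGrade 2 α) : isGrade 2 (pi27 α) :=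
  isGrade_smul _ (isGrade_add hα (isGrade_hstar (isGrade_wedge isGrade_Phi8 hα)))

lemma lambda2_e1 (i : Fin 8) :
    (lambda2 (e1 i) : Form 𝕜 8) = (2 : 𝕜)⁻¹ • (wedge (e1 0) (e1 i) + iprodB i phi8) := by
  rw [lambda2, iprod_sharp1_e1]

lemma isGrade_lambda2_e1 (i : Fin 8) : isGrade 2 (lambda2 (e1 i) : Form 𝕜 8) := by
  rw [lambda2_e1]
  exact isGrade_smul _ (isGrade_add (isGrade_wedge (isGrade_e1 0) (isGrade_e1 i))
    (isGrade_iprodB isGrade_phi8 i))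

lemma mapForm_lambda2_e1 {𝕃 : Type*} [NormedField 𝕃] (σ : 𝕜 →+* 𝕃) (i : Fin 8) :
    mapForm σ (lambda2 (e1 i)) = lambda2 (e1 i) := by
  rw [lambda2_e1, mapForm_smul, mapForm_add, mapForm_wedge, mapForm_iprodB, mapForm_phi8,
    mapForm_e1, mapForm_e1, map_inv₀, map_ofNat, lambda2_e1]

/-- The multiple `√8 λ⁴(e^i)`, which has integer coefficients. -/
def scaledLambda4 (i : Fin 8) : Form 𝕜 8 := wedge (e1 0) (iprodB i psi8) - wedge (e1 i) phi8

lemma lambda4_e1 (i : Fin 8) :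
    (lambda4 (e1 i) : Form K 8) = (algebraMap ℝ K (Real.sqrt 8))⁻¹ • scaledLambda4 i := by
  rw [lambda4, iprod_sharp1_e1, scaledLambda4]

lemma isGrade_scaledLambda4 (i : Fin 8) : isGrade 4 (scaledLambda4 i : Form 𝕜 8) :=
  isGrade_sub (isGrade_wedge (isGrade_e1 0) (isGrade_iprodB isGrade_psi8 i))
    (isGrade_wedge (isGrade_e1 i) isGrade_phi8)

lemma mapForm_scaledLambda4 {𝕃 : Type*} [NormedField 𝕃] (σ : 𝕜 →+* 𝕃) (i : Fin 8) :
    mapForm σ (scaledLambda4 i) = scaledLambda4 i := by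
  rw [scaledLambda4, mapForm_sub, mapForm_wedge, mapForm_wedge, mapForm_iprodB, mapForm_phi8,
    mapForm_psi8, mapForm_e1, mapForm_e1, scaledLambda4]

lemma inner'_lambda2_rat (μ ν : Fin 7) :
    inner' (lambda2 (e1 μ.succ) : Form ℚ 8) (lambda2 (e1 ν.succ)) = if μ = ν then 1 else 0 := by
  rw [inner'_eq_sum_powersetCard (isGrade_lambda2_e1 _)]
  simp only [lambda2_e1, Pi.smul_apply, Pi.add_apply, wedge_e1_apply]
  decide +revert +kernel

lemma inner'_scaledLambda4_rat (μ ν : Fin 7) :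
    inner' (scaledLambda4 μ.succ : Form ℚ 8) (scaledLambda4 ν.succ) = if μ = ν then 8 else 0 := by
  rw [inner'_eq_sum_powersetCard (isGrade_scaledLambda4 _)]
  simp only [scaledLambda4, Pi.sub_apply, wedge_e1_apply]
  decide +revert +kernel

lemma pi27_single_rat {s t : Finset (Fin 8)} (hs : s.card = 2) (ht : t.card = 2) :
    pi27 (Pi.single s 1 : Form ℚ 8) t =
      ∑ μ : Fin 7, lambda2 (e1 μ.succ) s * lambda2 (e1 μ.succ) t := by
  rw [← Finset.mem_powersetCard_univ] at hs ht
  simp only [pi27, Phi8, hstar, lambda2_e1, Pi.smul_apply, Pi.add_apply, wedge_e1_apply,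
    wedge_single_apply]
  revert t
  revert s
  decide +kernel

end Spin7

section Projections

variable {ι : Type*}

lemma inner'_comm (α β : Form 𝕜 n) : inner' α β = inner' β α :=
  Finset.sum_congr rfl fun _ _ => mul_comm _ _

lemma inner'_smul_left (c : 𝕜) (α β : Form 𝕜 n) : inner' (c • α) β = c * inner' α β := by
  simp only [inner', Pi.smul_apply, smul_eq_mul, Finset.mul_sum, mul_assoc]

lemma inner'_sum_left (s : Finset ι) (α : ι → Form 𝕜 n) (β : Form 𝕜 n) :
    inner' (∑ i ∈ s, α i) β = ∑ i ∈ s, inner' (α i) β := by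
  simp only [inner', Finset.sum_apply, Finset.sum_mul]
  exact Finset.sum_comm

lemma inner'_smul_right (c : 𝕜) (α β : Form 𝕜 n) : inner' α (c • β) = c * inner' α β := by
  rw [inner'_comm, inner'_smul_left, inner'_comm]

lemma inner'_sum_smul_self_of_orthonormal [Fintype ι] [DecidableEq ι] {v : ι → Form 𝕜 n}
    (hv : ∀ i j, inner' (v i) (v j) = if i = j then 1 else 0) (c : ι → 𝕜) :
    inner' (∑ i, c i • v i) (∑ i, c i • v i) = ∑ i, c i ^ 2 := by
  have hcoeff (j : ι) : inner' (v j) (∑ i, c i • v i) = c j := by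
    rw [inner'_comm, inner'_sum_left]
    simp [inner'_smul_left, hv]
  rw [inner'_sum_left]
  simp only [inner'_smul_left, hcoeff, sq]

lemma inner'_lambda2 [CharZero 𝕜] (μ ν : Fin 7) :
    inner' (lambda2 (e1 μ.succ) : Form 𝕜 8) (lambda2 (e1 ν.succ)) = if μ = ν then 1 else 0 := by
  rw [← mapForm_lambda2_e1 (Rat.castHom 𝕜), ← mapForm_lambda2_e1 (Rat.castHom 𝕜), ← map_inner',
    inner'_lambda2_rat, apply_ite (Rat.castHom 𝕜), map_one, map_zero]

lemma inner'_scaledLambda4 [CharZero 𝕜] (μ ν : Fin 7) :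
    inner' (scaledLambda4 μ.succ : Form 𝕜 8) (scaledLambda4 ν.succ) = if μ = ν then 8 else 0 := by
  rw [← mapForm_scaledLambda4 (Rat.castHom 𝕜), ← mapForm_scaledLambda4 (Rat.castHom 𝕜),
    ← map_inner', inner'_scaledLambda4_rat, apply_ite (Rat.castHom 𝕜), map_ofNat, map_zero]

lemma isLinearMap_pi27 : IsLinearMap 𝕜 (pi27 : Form 𝕜 8 → Form 𝕜 8) where
  map_add α β := by
    funext t
    simp only [pi27, hstar, wedge, Pi.smul_apply, Pi.add_apply, mul_add, Finset.sum_add_distrib,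
      smul_eq_mul]
    ring
  map_smul c α := by
    funext t
    simp only [pi27, hstar, wedge, Pi.smul_apply, Pi.add_apply, smul_eq_mul, mul_left_comm _ c,
      ← Finset.mul_sum]
    ring

lemma pi27_single [CharZero 𝕜] {s : Finset (Fin 8)} (hs : s.card = 2) :
    pi27 (Pi.single s 1 : Form 𝕜 8) =
      ∑ μ : Fin 7, (lambda2 (e1 μ.succ) : Form 𝕜 8) s • lambda2 (e1 μ.succ) := by
  have hsingle : (Pi.single s 1 : Form 𝕜 8) = mapForm (Rat.castHom 𝕜) (Pi.single s 1) := by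
    funext t
    simp [mapForm, Pi.single_apply, apply_ite (Rat.castHom 𝕜)]
  have hgrade : isGrade 2 (Pi.single s 1 : Form 𝕜 8) := fun t ht =>
    Pi.single_eq_of_ne (by rintro rfl; exact ht hs) _
  funext t
  rw [Finset.sum_apply]
  by_cases ht : t.card = 2
  · simp only [hsingle, ← mapForm_pi27, ← mapForm_lambda2_e1 (Rat.castHom 𝕜), mapForm,
      pi27_single_rat hs ht, map_sum, map_mul, Pi.smul_apply, smul_eq_mul]
  · simp only [isGrade_pi27 hgrade t ht, Pi.smul_apply, isGrade_lambda2_e1 _ t ht, smul_zero,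
      Finset.sum_const_zero]

lemma pi27_eq_sum [CharZero 𝕜] {α : Form 𝕜 8} (hα : isGrade 2 α) :
    pi27 α = ∑ μ : Fin 7, inner' α (lambda2 (e1 μ.succ)) • lambda2 (e1 μ.succ) := by
  conv_lhs => rw [eq_sum_single_of_isGrade hα]
  calc
    _ = ∑ s ∈ Finset.powersetCard 2 Finset.univ, α s • pi27 (Pi.single s 1 : Form 𝕜 8) := by
      simpa only [map_smul, IsLinearMap.mk'_apply] using
        map_sum (isLinearMap_pi27.mk' pi27) (fun s => α s • (Pi.single s 1 : Form 𝕜 8)) _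
    _ = ∑ s ∈ Finset.powersetCard 2 Finset.univ, ∑ μ : Fin 7,
          (α s * (lambda2 (e1 μ.succ) : Form 𝕜 8) s) • (lambda2 (e1 μ.succ) : Form 𝕜 8) :=
      Finset.sum_congr rfl fun s hs => by
        simp only [pi27_single (Finset.mem_powersetCard_univ.mp hs), Finset.smul_sum, mul_smul]
    _ = _ := by
      rw [Finset.sum_comm]
      simp only [inner'_eq_sum_powersetCard hα, Finset.sum_smul]

lemma inner'_pi27_self [CharZero 𝕜] {α : Form 𝕜 8} (hα : isGrade 2 α) :
    inner' (pi27 α) (pi27 α) = ∑ μ : Fin 7, inner' α (lambda2 (e1 μ.succ)) ^ 2 := by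
  rw [pi27_eq_sum hα, inner'_sum_smul_self_of_orthonormal inner'_lambda2]

lemma inner'_pi47_self (β : Form ℝ 8) :
    inner' (pi47 β) (pi47 β) = 8⁻¹ * ∑ μ : Fin 7, inner' β (scaledLambda4 μ.succ) ^ 2 := by
  have hsqrt : (Real.sqrt 8)⁻¹ ^ 2 = 8⁻¹ := by rw [inv_pow, Real.sq_sqrt (by norm_num)]
  have horth (μ ν : Fin 7) : inner' (lambda4 (e1 μ.succ) : Form ℝ 8) (lambda4 (e1 ν.succ)) =
      if μ = ν then 1 else 0 := by
    rw [lambda4_e1, lambda4_e1, inner'_smul_left, inner'_smul_right, ← mul_assoc, ← sq,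
      inner'_scaledLambda4, Algebra.algebraMap_self_apply, hsqrt, mul_ite, mul_zero,
      inv_mul_cancel₀ (by norm_num)]
  rw [pi47, inner'_sum_smul_self_of_orthonormal horth, Finset.mul_sum]
  simp only [lambda4_e1, inner'_smul_right, mul_pow, Algebra.algebraMap_self_apply, hsqrt]

lemma pi47_smul (c : K) (β : Form K 8) : pi47 (c • β) = c • pi47 β := by
  simp only [pi47, inner'_smul_left, mul_smul, Finset.smul_sum]

end Projections

section MixedTables

/-- The self-dual 2-forms `e⁰¹ + e²³`, `e⁰² − e¹³`, `e⁰³ + e¹²` on `ℝ⁴`. -/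
def selfDual : Fin 3 → Form ℤ 4 :=
  ![Pi.single {0, 1} 1 + Pi.single {2, 3} 1, Pi.single {0, 2} 1 - Pi.single {1, 3} 1,
    Pi.single {0, 3} 1 + Pi.single {1, 2} 1]

/-- The `dx ∧ dy` components of the forms `2λ²(e^{μ+1})`. -/
def mixedLambda2 : Fin 7 → Matrix (Fin 4) (Fin 4) ℤ :=
  ![0, 0, 0,
    !![1, 0, 0, 0; 0, -1, 0, 0; 0, 0, -1, 0; 0, 0, 0, 1],
    !![0, 1, 0, 0; 1, 0, 0, 0; 0, 0, 0, 1; 0, 0, 1, 0],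
    !![0, 0, 1, 0; 0, 0, 0, -1; 1, 0, 0, 0; 0, -1, 0, 0],
    !![0, 0, 0, 1; 0, 0, 1, 0; 0, -1, 0, 0; -1, 0, 0, 0]]

/-- The `dx² ∧ dy²` component of `Φ`, as a matrix in the basis `selfDual i ⊗ selfDual k`. -/
def mixedPhi : Matrix (Fin 3) (Fin 3) ℤ := !![1, 0, 0; 0, 1, 0; 0, 0, -1]

/-- The `dx² ∧ dy²` components of the forms `√8 λ⁴(e^{μ+1})`, as matrices in the basis
`selfDual i ⊗ selfDual k`. -/
def mixedLambda4 : Fin 7 → Matrix (Fin 3) (Fin 3) ℤ :=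
  ![!![0, 0, 0; 0, 0, -1; 0, -1, 0], !![0, 0, 1; 0, 0, 0; 1, 0, 0],
    !![0, 1, 0; -1, 0, 0; 0, 0, 0], 0, 0, 0, 0]

section CoefficientFunctions

variable {R : Type*} [CommRing R]

/-- The pairing of `Λ²A` with the self-dual forms `selfDual i` and `selfDual k`. -/
def selfDualMinor (A : Matrix (Fin 4) (Fin 4) R) (i k : Fin 3) : R :=
  ∑ J ∈ Finset.powersetCard 2 Finset.univ, (selfDual i J : R) *
    ∑ I ∈ Finset.powersetCard 2 Finset.univ, (selfDual k I : R) * minor A J I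

/-- `2⟨γ_A, λ²(e^{μ+1})⟩` for the mixed form `γ_A` with coefficient matrix `A`. -/
def lambda2Coeff (A : Matrix (Fin 4) (Fin 4) R) (μ : Fin 7) : R :=
  ∑ j, ∑ a, A j a * (mixedLambda2 μ j a : R)

/-- `-½⟨γ_A², Φ⟩` for the mixed form `γ_A` with coefficient matrix `A`. -/
def cayleyCoeff (A : Matrix (Fin 4) (Fin 4) R) : R :=
  ∑ i, ∑ k, (mixedPhi i k : R) * selfDualMinor A i k

/-- `-½⟨γ_A², √8 λ⁴(e^{μ+1})⟩` for the mixed form `γ_A` with coefficient matrix `A`. -/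
def lambda4Coeff (A : Matrix (Fin 4) (Fin 4) R) (μ : Fin 7) : R :=
  ∑ i, ∑ k, (mixedLambda4 μ i k : R) * selfDualMinor A i k

end CoefficientFunctions

lemma lambda2_blockSet_rat (μ : Fin 7) (j a : Fin 4) :
    (lambda2 (e1 μ.succ) : Form ℚ 8) (blockSet {j} {a}) = 2⁻¹ * mixedLambda2 μ j a := by
  simp only [lambda2_e1, Pi.smul_apply, Pi.add_apply, wedge_e1_apply]
  decide +revert +kernel

lemma Phi8_blockSet_rat {J I : Finset (Fin 4)} (hJ : J.card = 2) (hI : I.card = 2) :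
    (Phi8 : Form ℚ 8) (blockSet J I) =
      ∑ i, ∑ k, mixedPhi i k * (selfDual i J * selfDual k I) := by
  rw [← Finset.mem_powersetCard_univ] at hJ hI
  simp only [Phi8, Pi.add_apply, wedge_e1_apply]
  revert I
  revert J
  decide +kernel

lemma scaledLambda4_blockSet_rat (μ : Fin 7) {J I : Finset (Fin 4)} (hJ : J.card = 2)
    (hI : I.card = 2) :
    (scaledLambda4 μ.succ : Form ℚ 8) (blockSet J I) =
      ∑ i, ∑ k, mixedLambda4 μ i k * (selfDual i J * selfDual k I) := by
  rw [← Finset.mem_powersetCard_univ] at hJ hI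
  simp only [scaledLambda4, Pi.sub_apply, wedge_e1_apply]
  revert I
  revert J
  decide +revert +kernel

end MixedTables

section InnerProducts

variable {m p : ℕ}

lemma inner'_wedge_mixedForm_iterate (A : Matrix (Fin m) (Fin p) 𝕜) (k : ℕ)
    (β : Form 𝕜 (m + p)) :
    inner' ((wedge (mixedForm A))^[k] (Pi.single ∅ 1)) β =
      (-1) ^ k.choose 2 * k.factorial *
        ∑ J ∈ Finset.powersetCard k Finset.univ, ∑ I ∈ Finset.powersetCard k Finset.univ,
          minor A J I * β (blockSet J I) := by
  have hmem {q : ℕ} (s : Finset (Fin q)) (h : s ∉ Finset.powersetCard k Finset.univ) :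
      s.card ≠ k := mt Finset.mem_powersetCard_univ.mpr h
  rw [inner', sum_eq_sum_blockSet,
    ← Finset.sum_subset (Finset.subset_univ (Finset.powersetCard k Finset.univ)), Finset.mul_sum]
  · refine Finset.sum_congr rfl fun J hJ => ?_
    rw [← Finset.sum_subset (Finset.subset_univ (Finset.powersetCard k Finset.univ)),
      Finset.mul_sum]
    · refine Finset.sum_congr rfl fun I _ => ?_
      rw [wedge_mixedForm_iterate_blockSet, if_pos (Finset.mem_powersetCard_univ.mp hJ), mul_assoc]
    · intro I _ hI
      rw [wedge_mixedForm_iterate_eq_zero A fun h => hmem I hI h.2, zero_mul]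
  · intro J _ hJ
    refine Finset.sum_eq_zero fun I _ => ?_
    rw [wedge_mixedForm_iterate_eq_zero A fun h => hmem J hJ h.1, zero_mul]

lemma inner'_mixedForm (A : Matrix (Fin m) (Fin p) 𝕜) (β : Form 𝕜 (m + p)) :
    inner' (mixedForm A) β = ∑ j, ∑ a, A j a * β (blockSet {j} {a}) := by
  rw [mixedForm_eq_iterate, inner'_wedge_mixedForm_iterate]
  simp [Finset.powersetCard_one, minor_singleton]

lemma inner'_wedge_mixedForm_self (A : Matrix (Fin m) (Fin p) 𝕜) (β : Form 𝕜 (m + p)) :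
    inner' (wedge (mixedForm A) (mixedForm A)) β =
      -2 * ∑ J ∈ Finset.powersetCard 2 Finset.univ, ∑ I ∈ Finset.powersetCard 2 Finset.univ,
        minor A J I * β (blockSet J I) := by
  have h := inner'_wedge_mixedForm_iterate A 2 β
  rw [Function.iterate_succ_apply', ← mixedForm_eq_iterate] at h
  simpa using h

lemma inner'_wedge_mixedForm_self_of_selfDual (A : Matrix (Fin 4) (Fin 4) 𝕜) {β : Form 𝕜 8}
    {E : Matrix (Fin 3) (Fin 3) ℤ}
    (hβ : ∀ J I : Finset (Fin 4), J.card = 2 → I.card = 2 →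
      β (blockSet J I) = ((∑ i, ∑ k, E i k * (selfDual i J * selfDual k I) : ℤ) : 𝕜)) :
    inner' (wedge (mixedForm A) (mixedForm A)) β =
      -2 * ∑ i, ∑ k, (E i k : 𝕜) * selfDualMinor A i k := by
  rw [inner'_wedge_mixedForm_self]
  congr 1
  calc
    _ = ∑ J ∈ Finset.powersetCard 2 Finset.univ, ∑ I ∈ Finset.powersetCard 2 Finset.univ,
          ∑ i, ∑ k, (E i k : 𝕜) * (selfDual i J * (selfDual k I * minor A J I)) := by
      refine Finset.sum_congr rfl fun J hJ => Finset.sum_congr rfl fun I hI => ?_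
      rw [hβ J I (Finset.mem_powersetCard_univ.mp hJ) (Finset.mem_powersetCard_univ.mp hI)]
      push_cast
      simp only [mul_comm (minor A J I), Finset.sum_mul, mul_assoc]
    _ = _ := by
      simp only [selfDualMinor, Finset.mul_sum]
      rw [Finset.sum_comm_cycle]
      exact Finset.sum_congr rfl fun i _ => Finset.sum_comm_cycle

variable [CharZero 𝕜] (A : Matrix (Fin 4) (Fin 4) 𝕜)

lemma inner'_mixedForm_lambda2 (μ : Fin 7) :
    inner' (mixedForm A) (lambda2 (e1 μ.succ)) = 2⁻¹ * lambda2Coeff A μ := by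
  have htable (j a : Fin 4) : (lambda2 (e1 μ.succ) : Form 𝕜 8) (blockSet {j} {a}) =
      2⁻¹ * (mixedLambda2 μ j a : 𝕜) := by
    rw [← mapForm_lambda2_e1 (Rat.castHom 𝕜), mapForm, lambda2_blockSet_rat, map_mul, map_inv₀,
      map_ofNat, map_intCast]
  simp only [inner'_mixedForm, htable, lambda2Coeff, mul_left_comm _ (2⁻¹ : 𝕜), Finset.mul_sum]

lemma inner'_wedge_mixedForm_self_Phi8 :
    inner' (wedge (mixedForm A) (mixedForm A)) Phi8 = -2 * cayleyCoeff A := by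
  refine inner'_wedge_mixedForm_self_of_selfDual A fun J I hJ hI => ?_
  rw [← mapForm_Phi8 (Rat.castHom 𝕜), mapForm, Phi8_blockSet_rat hJ hI, map_intCast]

lemma inner'_wedge_mixedForm_self_scaledLambda4 (μ : Fin 7) :
    inner' (wedge (mixedForm A) (mixedForm A)) (scaledLambda4 μ.succ) =
      -2 * lambda4Coeff A μ := by
  refine inner'_wedge_mixedForm_self_of_selfDual A fun J I hJ hI => ?_
  rw [← mapForm_scaledLambda4 (Rat.castHom 𝕜), mapForm, scaledLambda4_blockSet_rat μ hJ hI,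
    map_intCast]

end InnerProducts

section PolynomialIdentities

variable {R : Type*} [CommRing R]

lemma sum_powersetCard_two_fin_four {M : Type*} [AddCommMonoid M] (F : Finset (Fin 4) → M) :
    ∑ s ∈ Finset.powersetCard 2 Finset.univ, F s =
      F {0, 1} + F {0, 2} + F {0, 3} + F {1, 2} + F {1, 3} + F {2, 3} := by
  have h : Finset.powersetCard 2 (Finset.univ : Finset (Fin 4)) =
      {{0, 1}, {0, 2}, {0, 3}, {1, 2}, {1, 3}, {2, 3}} := by decide +kernel
  rw [h, Finset.sum_insert (by decide), Finset.sum_insert (by decide),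
    Finset.sum_insert (by decide), Finset.sum_insert (by decide), Finset.sum_pair (by decide)]
  simp only [add_assoc]

lemma sum_selfDual_mul (i : Fin 3) (F : Finset (Fin 4) → R) :
    ∑ s ∈ Finset.powersetCard 2 Finset.univ, (selfDual i s : R) * F s =
      ![F {0, 1} + F {2, 3}, F {0, 2} - F {1, 3}, F {0, 3} + F {1, 2}] i := by
  have h01 : selfDual i {0, 1} = ![1, 0, 0] i := by decide +revert
  have h02 : selfDual i {0, 2} = ![0, 1, 0] i := by decide +revert
  have h03 : selfDual i {0, 3} = ![0, 0, 1] i := by decide +revert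
  have h12 : selfDual i {1, 2} = ![0, 0, 1] i := by decide +revert
  have h13 : selfDual i {1, 3} = ![0, -1, 0] i := by decide +revert
  have h23 : selfDual i {2, 3} = ![1, 0, 0] i := by decide +revert
  rw [sum_powersetCard_two_fin_four, h01, h02, h03, h12, h13, h23]
  fin_cases i <;> simp [sub_eq_add_neg]

lemma sum_powersetCard_eq_sum_compl_singleton {M : Type*} [AddCommMonoid M] {m : ℕ}
    (F : Finset (Fin (m + 1)) → M) :
    ∑ s ∈ Finset.powersetCard m Finset.univ, F s = ∑ i, F {i}ᶜ := by
  symm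
  refine Finset.sum_bij (fun i _ => {i}ᶜ) (fun i _ => ?_) (fun i _ j _ h => ?_) (fun s hs => ?_)
    fun _ _ => rfl
  · simp [Finset.card_compl]
  · simpa using h
  · have hcompl : sᶜ.card = 1 := by
      rw [Finset.card_compl, Finset.mem_powersetCard_univ.mp hs, Fintype.card_fin,
        Nat.add_sub_cancel_left]
    obtain ⟨i, hi⟩ := Finset.card_eq_one.mp hcompl
    exact ⟨i, Finset.mem_univ i, by rw [← hi, compl_compl]⟩

lemma sum_minor_sq {m p : ℕ} (A : Matrix (Fin m) (Fin p) R) :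
    ∑ J, ∑ I, minor A J I ^ 2 = ∑ k ∈ Finset.range (m + 1),
      ∑ J ∈ Finset.powersetCard k Finset.univ, ∑ I ∈ Finset.powersetCard k Finset.univ,
        minor A J I ^ 2 := by
  have hrow (J : Finset (Fin m)) : ∑ I, minor A J I ^ 2 =
      ∑ I ∈ Finset.powersetCard J.card Finset.univ, minor A J I ^ 2 := by
    refine (Finset.sum_subset (Finset.subset_univ _) fun I _ hI => ?_).symm
    rw [minor_of_card_ne A (mt Finset.mem_powersetCard_univ.mpr hI), zero_pow two_ne_zero]
  rw [← Finset.powerset_univ, Finset.sum_powerset, Finset.card_fin]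
  refine Finset.sum_congr rfl fun k _ => Finset.sum_congr rfl fun J hJ => ?_
  rw [hrow, Finset.mem_powersetCard_univ.mp hJ]

lemma minor_compl_singleton_sq {m : ℕ} (A : Matrix (Fin (m + 1)) (Fin (m + 1)) R)
    (j a : Fin (m + 1)) : minor A {j}ᶜ {a}ᶜ ^ 2 = A.adjugate.transpose j a ^ 2 := by
  rw [minor_compl_singleton, Matrix.transpose_apply, Matrix.adjugate_fin_succ_eq_det_submatrix,
    mul_pow, ← pow_mul, pow_mul', neg_one_sq, one_pow, one_mul]

variable (A : Matrix (Fin 4) (Fin 4) R)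

lemma sum_minor_sq_fin_four :
    ∑ J, ∑ I, minor A J I ^ 2 =
      1 + ∑ j, ∑ a, A j a ^ 2 +
        ∑ J ∈ Finset.powersetCard 2 Finset.univ, ∑ I ∈ Finset.powersetCard 2 Finset.univ,
          minor A J I ^ 2 +
        ∑ j, ∑ a, A.adjugate.transpose j a ^ 2 + A.det ^ 2 := by
  have htop : Finset.powersetCard 4 (Finset.univ : Finset (Fin 4)) = {Finset.univ} :=
    Finset.powersetCard_self _
  rw [sum_minor_sq]
  simp only [Finset.sum_range_succ, Finset.sum_range_zero, zero_add, Finset.powersetCard_zero,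
    Finset.powersetCard_one, Finset.sum_map, Finset.sum_singleton, Function.Embedding.coeFn_mk,
    minor_empty, one_pow, minor_singleton, sum_powersetCard_eq_sum_compl_singleton,
    minor_compl_singleton_sq, htop, minor_univ]

lemma lambda2Coeff_eq : lambda2Coeff A =
    ![0, 0, 0, A 0 0 - A 1 1 - A 2 2 + A 3 3, A 0 1 + A 1 0 + A 2 3 + A 3 2,
      A 0 2 - A 1 3 + A 2 0 - A 3 1, A 0 3 + A 1 2 - A 2 1 - A 3 0] := by
  simp [lambda2Coeff, mixedLambda2, funext_iff, Fin.forall_fin_succ, Fin.sum_univ_succ,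
    sub_eq_add_neg, add_assoc]

lemma cayleyCoeff_eq :
    cayleyCoeff A = selfDualMinor A 0 0 + selfDualMinor A 1 1 - selfDualMinor A 2 2 := by
  simp [cayleyCoeff, mixedPhi, Fin.sum_univ_succ, sub_eq_add_neg, add_assoc]

lemma lambda4Coeff_eq : lambda4Coeff A =
    ![-selfDualMinor A 1 2 - selfDualMinor A 2 1, selfDualMinor A 0 2 + selfDualMinor A 2 0,
      selfDualMinor A 0 1 - selfDualMinor A 1 0, 0, 0, 0, 0] := by
  simp [lambda4Coeff, mixedLambda4, funext_iff, Fin.forall_fin_succ, Fin.sum_univ_succ,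
    sub_eq_add_neg]

lemma lambda2Coeff_sub (B : Matrix (Fin 4) (Fin 4) R) (μ : Fin 7) :
    lambda2Coeff (A - B) μ = lambda2Coeff A μ - lambda2Coeff B μ := by
  simp only [lambda2Coeff, Matrix.sub_apply, sub_mul, Finset.sum_sub_distrib]

lemma sum_lambda2Coeff_sq :
    ∑ μ, lambda2Coeff A μ ^ 2 = ∑ j, ∑ a, A j a ^ 2 - 2 * cayleyCoeff A := by
  simp only [cayleyCoeff_eq, selfDualMinor, sum_selfDual_mul, minor_pair, Fin.reduceLT,
    lambda2Coeff_eq, Fin.sum_univ_seven, Fin.sum_univ_four, Matrix.cons_val]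
  ring

lemma cayleyCoeff_adjugate_transpose :
    cayleyCoeff A.adjugate.transpose = A.det * cayleyCoeff A := by
  simp only [cayleyCoeff_eq, selfDualMinor, sum_selfDual_mul, minor_pair, Fin.reduceLT,
    Matrix.transpose_apply, Matrix.cons_val]
  simp only [Matrix.adjugate_fin_succ_eq_det_submatrix, Matrix.det_succ_row_zero A,
    Matrix.det_fin_three, Matrix.submatrix_apply, Fin.sum_univ_four, Fin.succAbove,
    Fin.reduceCastSucc, Fin.reduceSucc, Fin.reduceLT, ↓reduceIte]
  generalize A 0 0 = a₀₀, A 0 1 = a₀₁, A 0 2 = a₀₂, A 0 3 = a₀₃, A 1 0 = a₁₀, A 1 1 = a₁₁,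
    A 1 2 = a₁₂, A 1 3 = a₁₃, A 2 0 = a₂₀, A 2 1 = a₂₁, A 2 2 = a₂₂, A 2 3 = a₂₃, A 3 0 = a₃₀,
    A 3 1 = a₃₁, A 3 2 = a₃₂, A 3 3 = a₃₃
  simp only [Fin.coe_ofNat_eq_mod]
  ring

lemma sum_minor_two_sq :
    ∑ J ∈ Finset.powersetCard 2 Finset.univ, ∑ I ∈ Finset.powersetCard 2 Finset.univ,
        minor A J I ^ 2 =
      cayleyCoeff A ^ 2 + ∑ μ, lambda4Coeff A μ ^ 2 + 2 * A.det -
        2 * ∑ μ, lambda2Coeff A μ * lambda2Coeff A.adjugate.transpose μ := by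
  simp only [cayleyCoeff_eq, lambda4Coeff_eq, lambda2Coeff_eq, selfDualMinor, sum_selfDual_mul,
    Fin.sum_univ_seven, Matrix.transpose_apply, Matrix.cons_val]
  simp only [sum_powersetCard_two_fin_four, minor_pair, Fin.reduceLT]
  simp only [Matrix.adjugate_fin_succ_eq_det_submatrix, Matrix.det_succ_row_zero A,
    Matrix.det_fin_three, Matrix.submatrix_apply, Fin.sum_univ_four, Fin.succAbove,
    Fin.reduceCastSucc, Fin.reduceSucc, Fin.reduceLT, ↓reduceIte]
  generalize A 0 0 = a₀₀, A 0 1 = a₀₁, A 0 2 = a₀₂, A 0 3 = a₀₃, A 1 0 = a₁₀, A 1 1 = a₁₁,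
    A 1 2 = a₁₂, A 1 3 = a₁₃, A 2 0 = a₂₀, A 2 1 = a₂₁, A 2 2 = a₂₂, A 2 3 = a₂₃, A 3 0 = a₃₀,
    A 3 1 = a₃₁, A 3 2 = a₃₂, A 3 3 = a₃₃
  simp only [Fin.coe_ofNat_eq_mod]
  ring

lemma sum_minor_sq_eq_sum_coeff_sq :
    ∑ J, ∑ I, minor A J I ^ 2 =
      (1 + cayleyCoeff A + A.det) ^ 2 + ∑ μ, lambda2Coeff (A - A.adjugate.transpose) μ ^ 2 +
        ∑ μ, lambda4Coeff A μ ^ 2 := by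
  have hA := sum_lambda2Coeff_sq A
  have hC := sum_lambda2Coeff_sq A.adjugate.transpose
  rw [cayleyCoeff_adjugate_transpose] at hC
  simp only [sum_minor_sq_fin_four, sum_minor_two_sq, lambda2Coeff_sub, sub_sq,
    Finset.sum_add_distrib, Finset.sum_sub_distrib, mul_assoc, ← Finset.mul_sum]
  linear_combination -hA - hC

end PolynomialIdentities

section CayleyEquality

variable (A : Matrix (Fin 4) (Fin 4) 𝕜)

lemma hstar_wedge_mixedForm_cube :
    hstar (wedge (mixedForm A) (wedge (mixedForm A) (mixedForm A))) =
      (6 : 𝕜) • mixedForm A.adjugate.transpose := by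
  have h := hstar_wedge_mixedForm_iterate A
  rw [Function.iterate_succ_apply', Function.iterate_succ_apply', ← mixedForm_eq_iterate] at h
  norm_num [h, Nat.choose, Nat.factorial]

lemma hstar_wedge_mixedForm_fourth_empty :
    hstar (wedge (mixedForm A) (wedge (mixedForm A) (wedge (mixedForm A) (mixedForm A)))) ∅ =
      24 * A.det := by
  have h := hstar_wedge_mixedForm_iterate_empty A
  rw [Function.iterate_succ_apply', Function.iterate_succ_apply', Function.iterate_succ_apply',
    ← mixedForm_eq_iterate] at h
  norm_num [h, Nat.choose, Nat.factorial]

lemma inner'_pi27_mixedForm_self [CharZero 𝕜] :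
    4 * inner' (pi27 (mixedForm A)) (pi27 (mixedForm A)) = ∑ μ, lambda2Coeff A μ ^ 2 := by
  rw [inner'_pi27_self (isGrade_mixedForm A), Finset.mul_sum]
  refine Finset.sum_congr rfl fun μ _ => ?_
  rw [inner'_mixedForm_lambda2]
  ring

lemma inner'_pi47_wedge_mixedForm_self (A : Matrix (Fin 4) (Fin 4) ℝ) :
    2 * inner' (pi47 (wedge (mixedForm A) (mixedForm A)))
      (pi47 (wedge (mixedForm A) (mixedForm A))) = ∑ μ, lambda4Coeff A μ ^ 2 := by
  rw [inner'_pi47_self, ← mul_assoc, Finset.mul_sum]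
  refine Finset.sum_congr rfl fun μ _ => ?_
  rw [inner'_wedge_mixedForm_self_scaledLambda4]
  ring

lemma real_cayley_equality (A : Matrix (Fin 4) (Fin 4) ℝ) (γ : Form ℝ 8) (hγ : γ = mixedForm A) :
    (1 - 2⁻¹ * inner' (wedge γ γ) Phi8 +
        24⁻¹ * hstar (wedge γ (wedge γ (wedge γ γ))) ∅) ^ 2 +
      4 * inner' (pi27 (γ - (6 : ℝ)⁻¹ • hstar (wedge γ (wedge γ γ))))
        (pi27 (γ - (6 : ℝ)⁻¹ • hstar (wedge γ (wedge γ γ)))) +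
      2 * inner' (pi47 (wedge γ γ)) (pi47 (wedge γ γ)) = (1 + mat2 γ).det := by
  subst hγ
  have hdet : (1 + mat2 (mixedForm A)).det = ∑ J, ∑ I, minor A J I ^ 2 :=
    det_one_add_mat2_mixedForm A
  rw [inner'_wedge_mixedForm_self_Phi8, hstar_wedge_mixedForm_fourth_empty,
    hstar_wedge_mixedForm_cube, inv_smul_smul₀ (by norm_num), ← mixedForm_sub,
    inner'_pi27_mixedForm_self, inner'_pi47_wedge_mixedForm_self]
  refine Eq.trans ?_ ((sum_minor_sq_eq_sum_coeff_sq A).symm.trans hdet.symm)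
  ring

end CayleyEquality

section ImaginaryForms

lemma mapForm_pi47 (β : Form ℝ 8) :
    mapForm Complex.ofRealHom (pi47 β) = pi47 (mapForm Complex.ofRealHom β) := by
  have hlambda4 (i : Fin 8) :
      mapForm Complex.ofRealHom (lambda4 (e1 i)) = lambda4 (e1 i) := by
    rw [lambda4_e1, mapForm_smul, mapForm_scaledLambda4, lambda4_e1, map_inv₀]
    rfl
  funext s
  simp only [pi47, ← hlambda4, ← map_inner']
  simp only [mapForm, Finset.sum_apply, map_sum, Pi.smul_apply, smul_eq_mul, map_mul]

lemma sq_fnorm_smul_mapForm {c : ℂ} (hc : ‖c‖ = 1) (α : Form ℝ n) :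
    fnorm (c • mapForm Complex.ofRealHom α) ^ 2 = inner' α α := by
  rw [fnorm, Real.sq_sqrt (Finset.sum_nonneg fun _ _ => sq_nonneg _)]
  simp [inner', mapForm, hc, sq]

end ImaginaryForms

lemma gammaS_eq_mixedForm (f : (Fin 4 → ℝ) → (Fin 4 → ℝ)) (x : Fin 4 → ℝ) :
    gammaS f x = mixedForm (Matrix.of (pd f x)) := by
  have hyi (a : Fin 4) : yi a = Fin.natAdd 4 a := Fin.ext (add_comm _ _)
  simp only [gammaS, mixedForm, hyi]
  rfl

theorem statement11_general (A : Matrix (Fin 4) (Fin 4) ℝ) (γ : Form ℝ 8) (hγ : γ = mixedForm A)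
    (F : Form ℂ 8) (hF : F = Complex.I • mapForm Complex.ofRealHom γ) :
    (1 + (2 : ℂ)⁻¹ * inner' (wedge F F) Phi8 +
        (24 : ℂ)⁻¹ * (hstar (wedge F (wedge F (wedge F F)))) ∅) ^ 2 +
      4 * (fnorm (pi27 (F + (6 : ℂ)⁻¹ • hstar (wedge F (wedge F F)))) : ℂ) ^ 2 +
      2 * (fnorm (pi47 (wedge F F)) : ℂ) ^ 2 =
    (((1 : Matrix (Fin 8) (Fin 8) ℝ) + mat2 γ).det : ℂ) := by
  have hF₂ : wedge F F = (-1 : ℂ) • mapForm Complex.ofRealHom (wedge γ γ) := by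
    rw [hF, wedge_smul_mapForm, Complex.I_mul_I]
  have hF₃ : F + (6 : ℂ)⁻¹ • hstar (wedge F (wedge F F)) = Complex.I •
      mapForm Complex.ofRealHom (γ - (6 : ℝ)⁻¹ • hstar (wedge γ (wedge γ γ))) := by
    rw [hF₂, hF, wedge_smul_mapForm, hstar_smul, mapForm_sub, mapForm_smul, mapForm_hstar,
      map_inv₀, map_ofNat]
    module
  have hF₄ : wedge F (wedge F (wedge F F)) =
      mapForm Complex.ofRealHom (wedge γ (wedge γ (wedge γ γ))) := by
    rw [hF₂, hF, wedge_smul_mapForm, wedge_smul_mapForm, ← mul_assoc, Complex.I_mul_I,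
      neg_one_mul, neg_neg, one_smul]
  rw [hF₃, hF₄, hF₂, isLinearMap_pi27.map_smul, ← mapForm_pi27, pi47_smul, ← mapForm_pi47,
    inner'_smul_left, ← mapForm_Phi8 Complex.ofRealHom, ← map_inner', ← mapForm_hstar,
    ← Complex.ofReal_pow, ← Complex.ofReal_pow, sq_fnorm_smul_mapForm Complex.norm_I,
    sq_fnorm_smul_mapForm (by simp), ← real_cayley_equality A γ hγ]
  simp only [mapForm, Complex.ofRealHom_eq_coe]
  push_cast
  ring

/-- Lemma 5.6, the mirror Cayley equality.  At every point of `B`: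
`(1 + ½⟨(F_∇^S)², Φ⟩ + (1/24) *₈((F_∇^S)⁴))² + 4‖π²₇(F_∇^S + (1/6) *₈(F_∇^S)³)‖²
  + 2‖π⁴₇((F_∇^S)²)‖² = det(id + (-√-1 F_∇^S)♯)`. -/
theorem statement11 (B : Set (Fin 4 → ℝ)) (hB : IsOpen B)
    (f : (Fin 4 → ℝ) → (Fin 4 → ℝ)) (hf : ContDiffOn ℝ (⊤ : ℕ∞) f B) :
    ∀ x ∈ B,
      (1 + (2 : ℂ)⁻¹ * inner' (wedge (FS8 f x) (FS8 f x)) Phi8 +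
          (24 : ℂ)⁻¹ *
            (hstar (wedge (FS8 f x) (wedge (FS8 f x) (wedge (FS8 f x) (FS8 f x))))) ∅) ^ 2 +
        4 * (fnorm (pi27 (FS8 f x + (6 : ℂ)⁻¹ •
          hstar (wedge (FS8 f x) (wedge (FS8 f x) (FS8 f x))))) : ℂ) ^ 2 +
        2 * (fnorm (pi47 (wedge (FS8 f x) (FS8 f x))) : ℂ) ^ 2 =
      (((1 : Matrix (Fin 8) (Fin 8) ℝ) + mat2 (gammaS f x)).det : ℂ) :=
  fun x _ => statement11_general _ _ (gammaS_eq_mixedForm f x) _ rfl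

end FMpaper
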